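/- Existence of a Gibbs-like measure: there exists a constant η > 1, namely η = ξ^{9h}, and a Borel probability measure μ_h on ℝ supported on the cookie-cutter set E such that for every σ ∈ Ω, η^{-1} |J_σ|^h ≤ μ_h(J_σ) ≤ η |J_σ|^h. -/

import Mathlib

open MeasureTheory Filter Metric

noncomputable section

/-- A cookie-cutter system on `J = [0,1]`. -/
structure CookieCutter where
  N : ℕ
  hN : 2 ≤ N
  Jsub : Fin N → Set ℝ
  f : ℝ → ℝ
  φ : Fin N → ℝ → ℝ
  c : ℝ
  γ : ℝ
  b : ℝ
  B : ℝ
  hJsub_sub : ∀ j, Jsub j ⊆ Set.Icc 0 1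
  hJsub_interval : ∀ j, ∃ u v : ℝ, u ≤ v ∧ Jsub j = Set.Icc u v
  hJsub_disj : ∀ i j, i ≠ j → Disjoint (Jsub i) (Jsub j)
  hbij : ∀ j, Set.BijOn f (Jsub j) (Set.Icc 0 1)
  hφ_maps : ∀ j, ∀ x ∈ Set.Icc (0:ℝ) 1, φ j x ∈ Jsub j
  hφ_rinv : ∀ j, ∀ x ∈ Set.Icc (0:ℝ) 1, f (φ j x) = x
  hφ_linv : ∀ j, ∀ x ∈ Jsub j, φ j (f x) = x
  hfdiff : ∀ j, ∀ x ∈ Jsub j, DifferentiableAt ℝ f x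
  hφdiff : ∀ j, ∀ x ∈ Set.Icc (0:ℝ) 1, DifferentiableAt ℝ (φ j) x
  hc : 0 < c
  hγ : γ ∈ Set.Ioc (0:ℝ) 1
  hHolder : ∀ j, ∀ x ∈ Jsub j, ∀ y ∈ Jsub j, |deriv f x - deriv f y| ≤ c * |x - y| ^ γ
  hb : IsGLB ((fun x => |deriv f x|) '' ⋃ j, Jsub j) b
  hB : IsLUB ((fun x => |deriv f x|) '' ⋃ j, Jsub j) B
  hb1 : 1 < b

namespace CookieCutter

variable (cc : CookieCutter)

/-- `φ_σ = φ_{σ_1} ∘ ⋯ ∘ φ_{σ_n}` for a word `σ`. -/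
def wordMap : List (Fin cc.N) → ℝ → ℝ
  | [] => id
  | j :: rest => cc.φ j ∘ wordMap rest

/-- The basic interval `J_σ = φ_σ(J)`. -/
def Jc (σ : List (Fin cc.N)) : Set ℝ := cc.wordMap σ '' Set.Icc 0 1

/-- The diameter `|J_σ|`. -/
def diamJ (σ : List (Fin cc.N)) : ℝ := Metric.diam (cc.Jc σ)

/-- `‖φ'_σ‖ = sup_{x ∈ J} |φ'_σ(x)|`. -/
def φnorm (σ : List (Fin cc.N)) : ℝ :=
  sSup ((fun x => |deriv (cc.wordMap σ) x|) '' Set.Icc 0 1)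

/-- The distortion constant `ξ = exp (c / (b^γ − 1))`. -/
def xi : ℝ := Real.exp (cc.c / (cc.b ^ cc.γ - 1))

/-- The cookie-cutter set `E = ⋂_{n ≥ 1} ⋃_{σ ∈ Ω_n} J_σ`. -/
def E : Set ℝ := ⋂ (n : ℕ) (_ : 1 ≤ n), ⋃ σ : Fin n → Fin cc.N, cc.Jc (List.ofFn σ)

/-- `η = ξ^{9h}`. -/
def eta (h : ℝ) : ℝ := cc.xi ^ ((9:ℝ) * h)

/-- `L = η³ ξ^{3h}`. -/
def Lconst (h : ℝ) : ℝ := (cc.eta h) ^ 3 * cc.xi ^ ((3:ℝ) * h)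

/-- A Gibbs-like measure for the cookie-cutter system: a Borel probability measure
supported on `E` with `η⁻¹|J_σ|^h ≤ μ(J_σ) ≤ η|J_σ|^h` for every word `σ`. -/
def IsGibbsLike (μ : Measure ℝ) (h : ℝ) : Prop :=
  IsProbabilityMeasure μ ∧ μ (cc.Eᶜ) = 0 ∧
    ∀ σ : List (Fin cc.N), σ ≠ [] →
      (cc.eta h)⁻¹ * cc.diamJ σ ^ h ≤ (μ (cc.Jc σ)).toReal ∧
      (μ (cc.Jc σ)).toReal ≤ cc.eta h * cc.diamJ σ ^ h

/-- A finite maximal antichain in `Ω`. -/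
def IsFMA (Γ : Finset (List (Fin cc.N))) : Prop :=
  (∀ σ ∈ Γ, σ ≠ []) ∧
  (∀ ω : ℕ → Fin cc.N, ∃ k : ℕ, 1 ≤ k ∧ (List.ofFn fun i : Fin k => ω i) ∈ Γ) ∧
  ∀ σ ∈ Γ, ∀ τ ∈ Γ, σ <+: τ → σ = τ

end CookieCutter

/-- The `n`-th quantization error of order `r`. -/
def Vnr (μ : Measure ℝ) (n : ℕ) (r : ℝ) : ℝ :=
  sInf ((fun α : Finset ℝ => ∫ x, Metric.infDist x (α : Set ℝ) ^ r ∂μ) ''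
    {α : Finset ℝ | α.Nonempty ∧ α.card ≤ n})

/-- The auxiliary quantization error `u_{n,r}` with `U = (0,1)`. -/
def unr (μ : Measure ℝ) (n : ℕ) (r : ℝ) : ℝ :=
  sInf ((fun α : Finset ℝ =>
      ∫ x, Metric.infDist x ((α : Set ℝ) ∪ (Set.Ioo (0:ℝ) 1)ᶜ) ^ r ∂μ) ''
    {α : Finset ℝ | α.card ≤ n})

namespace CookieCutter

variable (cc : CookieCutter)

lemma φ_mem_Icc (j : Fin cc.N) {x : ℝ} (hx : x ∈ Set.Icc (0:ℝ) 1) :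
    cc.φ j x ∈ Set.Icc (0:ℝ) 1 :=
  cc.hJsub_sub j (cc.hφ_maps j x hx)

lemma wordMap_mem_Icc (σ : List (Fin cc.N)) {x : ℝ} (hx : x ∈ Set.Icc (0:ℝ) 1) :
    cc.wordMap σ x ∈ Set.Icc (0:ℝ) 1 := by
  induction σ with
  | nil => exact hx
  | cons j σ ih => exact cc.φ_mem_Icc j ih

lemma wordMap_append (σ τ : List (Fin cc.N)) :
    cc.wordMap (σ ++ τ) = cc.wordMap σ ∘ cc.wordMap τ := by
  induction σ with
  | nil => rfl
  | cons j σ ih => simp only [List.cons_append, wordMap, ih]; rfl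

lemma differentiableAt_wordMap (σ : List (Fin cc.N)) {x : ℝ} (hx : x ∈ Set.Icc (0:ℝ) 1) :
    DifferentiableAt ℝ (cc.wordMap σ) x := by
  induction σ with
  | nil => exact differentiableAt_id
  | cons j σ ih => exact (cc.hφdiff j _ (cc.wordMap_mem_Icc σ hx)).comp x ih

lemma deriv_wordMap_cons (j : Fin cc.N) (σ : List (Fin cc.N)) {x : ℝ}
    (hx : x ∈ Set.Icc (0:ℝ) 1) :
    deriv (cc.wordMap (j :: σ)) x =
      deriv (cc.φ j) (cc.wordMap σ x) * deriv (cc.wordMap σ) x :=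
  deriv_comp x (cc.hφdiff j _ (cc.wordMap_mem_Icc σ hx)) (cc.differentiableAt_wordMap σ hx)

lemma deriv_wordMap_append (σ τ : List (Fin cc.N)) {x : ℝ} (hx : x ∈ Set.Icc (0:ℝ) 1) :
    deriv (cc.wordMap (σ ++ τ)) x =
      deriv (cc.wordMap σ) (cc.wordMap τ x) * deriv (cc.wordMap τ) x := by
  rw [wordMap_append]
  exact deriv_comp x (cc.differentiableAt_wordMap σ (cc.wordMap_mem_Icc τ hx))
    (cc.differentiableAt_wordMap τ hx)

lemma deriv_f_mul_deriv_φ (j : Fin cc.N) {x : ℝ} (hx : x ∈ Set.Icc (0:ℝ) 1) :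
    deriv cc.f (cc.φ j x) * deriv (cc.φ j) x = 1 := by
  have h1 : HasDerivWithinAt (cc.f ∘ cc.φ j) (deriv cc.f (cc.φ j x) * deriv (cc.φ j) x)
      (Set.Icc 0 1) x :=
    ((cc.hfdiff j _ (cc.hφ_maps j x hx)).hasDerivAt.comp x
      (cc.hφdiff j x hx).hasDerivAt).hasDerivWithinAt
  have h2 : HasDerivWithinAt (cc.f ∘ cc.φ j) 1 (Set.Icc 0 1) x :=
    (hasDerivWithinAt_id x _).congr (fun y hy => cc.hφ_rinv j y hy) (cc.hφ_rinv j x hx)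
  exact (uniqueDiffOn_Icc zero_lt_one x hx).eq_deriv _ h1 h2

lemma b_pos : 0 < cc.b := zero_lt_one.trans cc.hb1

lemma b_le_abs_deriv_f (j : Fin cc.N) {x : ℝ} (hx : x ∈ Set.Icc (0:ℝ) 1) :
    cc.b ≤ |deriv cc.f (cc.φ j x)| :=
  cc.hb.1 ⟨_, Set.mem_iUnion.2 ⟨j, cc.hφ_maps j x hx⟩, rfl⟩

lemma abs_deriv_φ_eq (j : Fin cc.N) {x : ℝ} (hx : x ∈ Set.Icc (0:ℝ) 1) :
    |deriv (cc.φ j) x| = |deriv cc.f (cc.φ j x)|⁻¹ := by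
  refine eq_inv_of_mul_eq_one_right ?_
  rw [← abs_mul, cc.deriv_f_mul_deriv_φ j hx, abs_one]

lemma abs_deriv_φ_le (j : Fin cc.N) {x : ℝ} (hx : x ∈ Set.Icc (0:ℝ) 1) :
    |deriv (cc.φ j) x| ≤ cc.b⁻¹ := by
  rw [cc.abs_deriv_φ_eq j hx]
  exact inv_anti₀ cc.b_pos (cc.b_le_abs_deriv_f j hx)

lemma abs_deriv_φ_pos (j : Fin cc.N) {x : ℝ} (hx : x ∈ Set.Icc (0:ℝ) 1) :
    0 < |deriv (cc.φ j) x| := by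
  rw [cc.abs_deriv_φ_eq j hx]
  exact inv_pos.2 (cc.b_pos.trans_le (cc.b_le_abs_deriv_f j hx))

lemma abs_deriv_wordMap_pos (σ : List (Fin cc.N)) {x : ℝ} (hx : x ∈ Set.Icc (0:ℝ) 1) :
    0 < |deriv (cc.wordMap σ) x| := by
  induction σ with
  | nil => simp [wordMap]
  | cons j σ ih =>
    rw [cc.deriv_wordMap_cons j σ hx, abs_mul]
    exact mul_pos (cc.abs_deriv_φ_pos j (cc.wordMap_mem_Icc σ hx)) ih

lemma abs_φ_sub_le (j : Fin cc.N) {x y : ℝ} (hx : x ∈ Set.Icc (0:ℝ) 1)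
    (hy : y ∈ Set.Icc (0:ℝ) 1) : |cc.φ j x - cc.φ j y| ≤ cc.b⁻¹ * |x - y| :=
  (convex_Icc (0:ℝ) 1).norm_image_sub_le_of_norm_deriv_le (cc.hφdiff j)
    (fun _ hz => cc.abs_deriv_φ_le j hz) hy hx

lemma abs_wordMap_sub_le (σ : List (Fin cc.N)) {x y : ℝ} (hx : x ∈ Set.Icc (0:ℝ) 1)
    (hy : y ∈ Set.Icc (0:ℝ) 1) :
    |cc.wordMap σ x - cc.wordMap σ y| ≤ cc.b⁻¹ ^ σ.length := by
  induction σ with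
  | nil =>
    simp only [wordMap, id, List.length_nil, pow_zero]
    exact abs_le.2 ⟨by linarith [hx.1, hy.2], by linarith [hx.2, hy.1]⟩
  | cons j σ ih =>
    refine (cc.abs_φ_sub_le j (cc.wordMap_mem_Icc σ hx) (cc.wordMap_mem_Icc σ hy)).trans ?_
    rw [List.length_cons, pow_succ']
    exact mul_le_mul_of_nonneg_left ih (inv_nonneg.2 cc.b_pos.le)

lemma abs_deriv_φ_le_exp_mul (j : Fin cc.N) {x y : ℝ} (hx : x ∈ Set.Icc (0:ℝ) 1)
    (hy : y ∈ Set.Icc (0:ℝ) 1) :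
    |deriv (cc.φ j) x| ≤ Real.exp (cc.c * |cc.φ j x - cc.φ j y| ^ cc.γ) * |deriv (cc.φ j) y| := by
  rw [cc.abs_deriv_φ_eq j hx, cc.abs_deriv_φ_eq j hy]
  have hu := cc.b_le_abs_deriv_f j hx
  have hv := cc.b_le_abs_deriv_f j hy
  have hH := cc.hHolder j _ (cc.hφ_maps j x hx) _ (cc.hφ_maps j y hy)
  set u := deriv cc.f (cc.φ j x)
  set v := deriv cc.f (cc.φ j y)
  set d := cc.c * |cc.φ j x - cc.φ j y| ^ cc.γ
  have hd : 0 ≤ d := (abs_nonneg _).trans hH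
  have hu1 : 1 ≤ |u| := cc.hb1.le.trans hu
  have hv0 : 0 < |v| := cc.b_pos.trans_le hv
  rw [← div_eq_mul_inv, inv_eq_one_div, div_le_div_iff₀ (by linarith) hv0, one_mul]
  have h1 : |v| ≤ |u| + d := by
    have := abs_sub_abs_le_abs_sub v u
    rw [abs_sub_comm] at this
    linarith
  calc |v| ≤ (d + 1) * |u| := by nlinarith
    _ ≤ Real.exp d * |u| := by gcongr; exact Real.add_one_le_exp d

lemma one_lt_b_rpow : 1 < cc.b ^ cc.γ := Real.one_lt_rpow cc.hb1 cc.hγ.1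

lemma one_lt_xi : 1 < cc.xi :=
  Real.one_lt_exp_iff.2 (div_pos cc.hc (sub_pos.2 cc.one_lt_b_rpow))

lemma xi_pos : 0 < cc.xi := zero_lt_one.trans cc.one_lt_xi

lemma abs_deriv_wordMap_le_exp_mul (σ : List (Fin cc.N)) {x y : ℝ}
    (hx : x ∈ Set.Icc (0:ℝ) 1) (hy : y ∈ Set.Icc (0:ℝ) 1) :
    |deriv (cc.wordMap σ) x| ≤
      Real.exp (cc.c / (cc.b ^ cc.γ - 1) * (1 - (cc.b ^ cc.γ)⁻¹ ^ σ.length)) *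
        |deriv (cc.wordMap σ) y| := by
  induction σ with
  | nil => simp [wordMap]
  | cons j σ ih =>
    have hx' := cc.wordMap_mem_Icc σ hx
    have hy' := cc.wordMap_mem_Icc σ hy
    have hstep : |deriv (cc.φ j) (cc.wordMap σ x)| ≤
        Real.exp (cc.c * (cc.b ^ cc.γ)⁻¹ ^ (σ.length + 1)) *
          |deriv (cc.φ j) (cc.wordMap σ y)| := by
      refine (cc.abs_deriv_φ_le_exp_mul j hx' hy').trans ?_
      gcongr
      · exact cc.hc.le
      · have h1 := cc.abs_wordMap_sub_le (j :: σ) hx hy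
        have h2 := Real.rpow_le_rpow (abs_nonneg _) h1 cc.hγ.1.le
        refine h2.trans_eq ?_
        rw [List.length_cons, ← Real.rpow_natCast, ← Real.rpow_mul (inv_nonneg.2 cc.b_pos.le),
          mul_comm, Real.rpow_mul (inv_nonneg.2 cc.b_pos.le), Real.inv_rpow cc.b_pos.le,
          Real.rpow_natCast]
    rw [cc.deriv_wordMap_cons j σ hx, cc.deriv_wordMap_cons j σ hy, abs_mul, abs_mul]
    refine (mul_le_mul hstep ih (abs_nonneg _) (by positivity)).trans_eq ?_
    rw [mul_mul_mul_comm, ← Real.exp_add, List.length_cons]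
    congr 2
    have hb := cc.one_lt_b_rpow
    have hb0 : cc.b ^ cc.γ ≠ 0 := by linarith
    have hb1 : cc.b ^ cc.γ - 1 ≠ 0 := by linarith
    rw [pow_succ]
    field_simp
    ring

lemma abs_deriv_wordMap_le_xi_mul (σ : List (Fin cc.N)) {x y : ℝ}
    (hx : x ∈ Set.Icc (0:ℝ) 1) (hy : y ∈ Set.Icc (0:ℝ) 1) :
    |deriv (cc.wordMap σ) x| ≤ cc.xi * |deriv (cc.wordMap σ) y| := by
  refine (cc.abs_deriv_wordMap_le_exp_mul σ hx hy).trans ?_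
  have hb := cc.one_lt_b_rpow
  refine mul_le_mul_of_nonneg_right (Real.exp_le_exp.2 ?_) (abs_nonneg _)
  refine mul_le_of_le_one_right (div_pos cc.hc (sub_pos.2 hb)).le ?_
  have : 0 ≤ (cc.b ^ cc.γ)⁻¹ ^ σ.length := by positivity
  linarith

lemma abs_deriv_le_φnorm (σ : List (Fin cc.N)) {x : ℝ} (hx : x ∈ Set.Icc (0:ℝ) 1) :
    |deriv (cc.wordMap σ) x| ≤ cc.φnorm σ := by
  refine le_csSup ⟨cc.xi * |deriv (cc.wordMap σ) 0|, ?_⟩ ⟨x, hx, rfl⟩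
  rintro _ ⟨y, hy, rfl⟩
  exact cc.abs_deriv_wordMap_le_xi_mul σ hy (by simp)

lemma φnorm_le_of_forall (σ : List (Fin cc.N)) {C : ℝ}
    (hC : ∀ x ∈ Set.Icc (0:ℝ) 1, |deriv (cc.wordMap σ) x| ≤ C) : cc.φnorm σ ≤ C := by
  refine csSup_le ⟨_, 0, by simp, rfl⟩ ?_
  rintro _ ⟨y, hy, rfl⟩
  exact hC y hy

lemma φnorm_le_xi_mul (σ : List (Fin cc.N)) {x : ℝ} (hx : x ∈ Set.Icc (0:ℝ) 1) :
    cc.φnorm σ ≤ cc.xi * |deriv (cc.wordMap σ) x| :=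
  cc.φnorm_le_of_forall σ fun _ hy => cc.abs_deriv_wordMap_le_xi_mul σ hy hx

lemma φnorm_pos (σ : List (Fin cc.N)) : 0 < cc.φnorm σ :=
  (cc.abs_deriv_wordMap_pos σ (x := 0) (by simp)).trans_le
    (cc.abs_deriv_le_φnorm σ (by simp))

lemma φnorm_append_le (σ τ : List (Fin cc.N)) :
    cc.φnorm (σ ++ τ) ≤ cc.φnorm σ * cc.φnorm τ := by
  refine cc.φnorm_le_of_forall _ fun x hx => ?_
  rw [cc.deriv_wordMap_append σ τ hx, abs_mul]
  exact mul_le_mul (cc.abs_deriv_le_φnorm σ (cc.wordMap_mem_Icc τ hx))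
    (cc.abs_deriv_le_φnorm τ hx) (abs_nonneg _) (cc.φnorm_pos σ).le

lemma φnorm_mul_le (σ τ : List (Fin cc.N)) :
    cc.φnorm σ * cc.φnorm τ ≤ cc.xi * cc.φnorm (σ ++ τ) := by
  have hσ := cc.φnorm_pos σ
  rw [mul_comm, ← le_div_iff₀ hσ]
  refine cc.φnorm_le_of_forall _ fun x hx => ?_
  rw [le_div_iff₀ hσ]
  calc |deriv (cc.wordMap τ) x| * cc.φnorm σ
      ≤ |deriv (cc.wordMap τ) x| * (cc.xi * |deriv (cc.wordMap σ) (cc.wordMap τ x)|) := by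
        gcongr
        exact cc.φnorm_le_xi_mul σ (cc.wordMap_mem_Icc τ hx)
    _ = cc.xi * |deriv (cc.wordMap (σ ++ τ)) x| := by
        rw [cc.deriv_wordMap_append σ τ hx, abs_mul]; ring
    _ ≤ cc.xi * cc.φnorm (σ ++ τ) :=
        mul_le_mul_of_nonneg_left (cc.abs_deriv_le_φnorm _ hx) cc.xi_pos.le

lemma isCompact_Jc (σ : List (Fin cc.N)) : IsCompact (cc.Jc σ) :=
  isCompact_Icc.image_of_continuousOn fun _ hx =>
    (cc.differentiableAt_wordMap σ hx).continuousAt.continuousWithinAt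

lemma diamJ_le_φnorm (σ : List (Fin cc.N)) : cc.diamJ σ ≤ cc.φnorm σ := by
  refine Metric.diam_le_of_forall_dist_le (cc.φnorm_pos σ).le ?_
  rintro _ ⟨x, hx, rfl⟩ _ ⟨y, hy, rfl⟩
  have h1 := (convex_Icc (0:ℝ) 1).norm_image_sub_le_of_norm_deriv_le
    (fun z hz => cc.differentiableAt_wordMap σ hz)
    (fun z hz => cc.abs_deriv_le_φnorm σ hz) hy hx
  refine h1.trans (mul_le_of_le_one_right (cc.φnorm_pos σ).le ?_)
  exact abs_le.2 ⟨by linarith [hx.1, hy.2], by linarith [hx.2, hy.1]⟩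

lemma φnorm_le_xi_mul_diamJ (σ : List (Fin cc.N)) :
    cc.φnorm σ ≤ cc.xi * cc.diamJ σ := by
  obtain ⟨z, hz, hz'⟩ := exists_deriv_eq_slope (cc.wordMap σ) (zero_lt_one (α := ℝ))
    (fun x hx => (cc.differentiableAt_wordMap σ hx).continuousAt.continuousWithinAt)
    (fun x hx => (cc.differentiableAt_wordMap σ
      (Set.Ioo_subset_Icc_self hx)).differentiableWithinAt)
  refine (cc.φnorm_le_xi_mul σ (Set.Ioo_subset_Icc_self hz)).trans ?_
  refine mul_le_mul_of_nonneg_left ?_ cc.xi_pos.le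
  rw [hz', sub_zero, div_one]
  exact Metric.dist_le_diam_of_mem (cc.isCompact_Jc σ).isBounded
    ⟨1, by simp, rfl⟩ ⟨0, by simp, rfl⟩

lemma eq_of_wordMap_eq {σ τ : List (Fin cc.N)} (hl : σ.length = τ.length) {x y : ℝ}
    (hx : x ∈ Set.Icc (0:ℝ) 1) (hy : y ∈ Set.Icc (0:ℝ) 1)
    (hxy : cc.wordMap σ x = cc.wordMap τ y) : σ = τ := by
  induction σ generalizing τ with
  | nil => exact (List.length_eq_zero_iff.1 hl.symm).symm
  | cons i σ ih =>
    cases τ with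
    | nil => simp at hl
    | cons j τ =>
      have hx' := cc.wordMap_mem_Icc σ hx
      have hy' := cc.wordMap_mem_Icc τ hy
      have hxy' : cc.φ i (cc.wordMap σ x) = cc.φ j (cc.wordMap τ y) := hxy
      have hij : i = j := by
        by_contra hij
        refine Set.disjoint_left.1 (cc.hJsub_disj i j hij) (cc.hφ_maps i _ hx') ?_
        rw [hxy']
        exact cc.hφ_maps j _ hy'
      subst hij
      have := congrArg cc.f hxy'
      rw [cc.hφ_rinv i _ hx', cc.hφ_rinv i _ hy'] at this
      rw [ih (by simpa using hl) this]

/-- The partition function `∑_{σ ∈ Ω_k} ‖φ'_σ‖ ^ t`. -/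
def partitionSum (t : ℝ) (k : ℕ) : ℝ :=
  ∑ σ : Fin k → Fin cc.N, cc.φnorm (List.ofFn σ) ^ t

lemma partitionSum_pos (t : ℝ) (k : ℕ) : 0 < cc.partitionSum t k := by
  have : Nonempty (Fin k → Fin cc.N) := ⟨fun _ => ⟨0, by have := cc.hN; omega⟩⟩
  exact Finset.sum_pos (fun σ _ => Real.rpow_pos_of_pos (cc.φnorm_pos _) _)
    Finset.univ_nonempty

lemma sum_append {M : Type*} [AddCommMonoid M] (k m : ℕ) (F : List (Fin cc.N) → M) :
    ∑ ω : Fin (k + m) → Fin cc.N, F (List.ofFn ω) =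
      ∑ σ : Fin k → Fin cc.N, ∑ τ : Fin m → Fin cc.N, F (List.ofFn σ ++ List.ofFn τ) := by
  rw [← (Fin.appendEquiv k m).sum_comp, Fintype.sum_prod_type]
  simp [Fin.appendEquiv, List.ofFn_fin_append]

lemma sum_append_le {t : ℝ} (ht : 0 ≤ t) (σ : List (Fin cc.N)) (m : ℕ) :
    ∑ τ : Fin m → Fin cc.N, cc.φnorm (σ ++ List.ofFn τ) ^ t ≤
      cc.φnorm σ ^ t * cc.partitionSum t m := by
  rw [partitionSum, Finset.mul_sum]
  refine Finset.sum_le_sum fun τ _ => ?_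
  rw [← Real.mul_rpow (cc.φnorm_pos _).le (cc.φnorm_pos _).le]
  exact Real.rpow_le_rpow (cc.φnorm_pos _).le (cc.φnorm_append_le _ _) ht

lemma mul_le_sum_append {t : ℝ} (ht : 0 ≤ t) (σ : List (Fin cc.N)) (m : ℕ) :
    cc.φnorm σ ^ t * cc.partitionSum t m ≤
      cc.xi ^ t * ∑ τ : Fin m → Fin cc.N, cc.φnorm (σ ++ List.ofFn τ) ^ t := by
  rw [partitionSum, Finset.mul_sum, Finset.mul_sum]
  refine Finset.sum_le_sum fun τ _ => ?_
  rw [← Real.mul_rpow (cc.φnorm_pos _).le (cc.φnorm_pos _).le,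
    ← Real.mul_rpow cc.xi_pos.le (cc.φnorm_pos _).le]
  exact Real.rpow_le_rpow (mul_pos (cc.φnorm_pos _) (cc.φnorm_pos _)).le
    (cc.φnorm_mul_le _ _) ht

lemma partitionSum_add_le {t : ℝ} (ht : 0 ≤ t) (k m : ℕ) :
    cc.partitionSum t (k + m) ≤ cc.partitionSum t k * cc.partitionSum t m := by
  rw [partitionSum, cc.sum_append k m (fun ω => cc.φnorm ω ^ t), partitionSum, Finset.sum_mul]
  exact Finset.sum_le_sum fun σ _ => cc.sum_append_le ht _ m

lemma partitionSum_mul_le {t : ℝ} (ht : 0 ≤ t) (k m : ℕ) :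
    cc.partitionSum t k * cc.partitionSum t m ≤ cc.xi ^ t * cc.partitionSum t (k + m) := by
  rw [partitionSum.eq_1 cc t (k + m), cc.sum_append k m (fun ω => cc.φnorm ω ^ t),
    partitionSum.eq_1 cc t k, Finset.sum_mul, Finset.mul_sum]
  exact Finset.sum_le_sum fun σ _ => cc.mul_le_sum_append ht _ m

end CookieCutter

lemma one_le_of_submultiplicative_of_tendsto_log {u : ℕ → ℝ} (hpos : ∀ k, 0 < u k)
    (hsub : ∀ k m, u (k + m) ≤ u k * u m)
    (hlim : Tendsto (fun k : ℕ => Real.log (u k) / k) atTop (nhds 0)) {k : ℕ} (hk : k ≠ 0) :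
    1 ≤ u k := by
  have hs : Subadditive fun k => Real.log (u k) := fun m n => by
    rw [← Real.log_mul (hpos m).ne' (hpos n).ne']
    exact Real.log_le_log (hpos _) (hsub m n)
  have hbdd := hlim.bddBelow_range
  have h0 : hs.lim = 0 := tendsto_nhds_unique (hs.tendsto_lim hbdd) hlim
  have h1 := hs.lim_le_div hbdd hk
  rw [h0, le_div_iff₀ (by positivity), zero_mul] at h1
  exact (Real.log_nonneg_iff (hpos k)).1 h1

lemma exists_ultrafilter_tendsto_of_isCompact {K : Set ℝ} (hK : IsCompact K)
    (ν : ℕ → ProbabilityMeasure ℝ) (hν : ∀ n, (ν n : Measure ℝ) Kᶜ = 0) :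
    ∃ (μ : ProbabilityMeasure ℝ) (U : Ultrafilter ℕ), (U : Filter ℕ) ≤ atTop ∧
      Tendsto ν U (nhds μ) := by
  have ht : IsTightMeasureSet {((μ : ProbabilityMeasure ℝ) : Measure ℝ) | μ ∈ Set.range ν} := by
    rw [isTightMeasureSet_iff_exists_isCompact_measure_compl_le]
    rintro ε -
    refine ⟨K, hK, ?_⟩
    rintro _ ⟨_, ⟨n, rfl⟩, rfl⟩
    rw [hν n]
    exact zero_le
  have hc := isCompact_closure_of_isTightMeasureSet ht
  obtain ⟨μ, -, hμ⟩ := hc.ultrafilter_le_nhds ((Ultrafilter.of (atTop : Filter ℕ)).map ν) (by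
    rw [le_principal_iff, Ultrafilter.coe_map, Filter.mem_map]
    exact Filter.mem_of_superset Filter.univ_mem
      fun n _ => subset_closure (Set.mem_range_self n))
  exact ⟨μ, Ultrafilter.of atTop, Ultrafilter.of_le _, hμ⟩

namespace CookieCutter

variable (cc : CookieCutter)

lemma partitionSum_bounds {t : ℝ} (ht : 0 ≤ t)
    (hlim : Tendsto (fun k : ℕ => Real.log (cc.partitionSum t k) / k) atTop (nhds 0))
    {k : ℕ} (hk : k ≠ 0) :
    1 ≤ cc.partitionSum t k ∧ cc.partitionSum t k ≤ cc.xi ^ t := by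
  refine ⟨one_le_of_submultiplicative_of_tendsto_log (cc.partitionSum_pos t)
    (cc.partitionSum_add_le ht) hlim hk, ?_⟩
  have hξ : 0 < cc.xi ^ t := Real.rpow_pos_of_pos cc.xi_pos t
  have h1 := one_le_of_submultiplicative_of_tendsto_log
    (u := fun k => cc.xi ^ t / cc.partitionSum t k)
    (fun k => div_pos hξ (cc.partitionSum_pos t k)) (fun k m => ?_) ?_ hk
  · rwa [le_div_iff₀ (cc.partitionSum_pos t k), one_mul] at h1
  · have hkm := cc.partitionSum_mul_le ht k m
    have h1 := cc.partitionSum_pos t k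
    have h2 := cc.partitionSum_pos t m
    rw [div_mul_div_comm, div_le_div_iff₀ (cc.partitionSum_pos t _) (mul_pos h1 h2), mul_assoc]
    exact mul_le_mul_of_nonneg_left hkm hξ.le
  · have h0 := (tendsto_const_div_atTop_nhds_zero_nat (Real.log (cc.xi ^ t))).sub hlim
    rw [sub_zero] at h0
    refine h0.congr fun k => ?_
    rw [Real.log_div hξ.ne' (cc.partitionSum_pos t k).ne', sub_div]

/-- The mass `‖φ'_ω‖ ^ t / ∑_{τ ∈ Ω_n} ‖φ'_τ‖ ^ t` of a word `ω` of length `n`. -/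
def weight (t : ℝ) (n : ℕ) (ω : List (Fin cc.N)) : ℝ :=
  cc.φnorm ω ^ t / cc.partitionSum t n

lemma weight_nonneg (t : ℝ) (n : ℕ) (ω : List (Fin cc.N)) : 0 ≤ cc.weight t n ω :=
  div_nonneg (Real.rpow_nonneg (cc.φnorm_pos _).le _) (cc.partitionSum_pos t n).le

lemma sum_weight (t : ℝ) (n : ℕ) :
    ∑ ω : Fin n → Fin cc.N, cc.weight t n (List.ofFn ω) = 1 := by
  simp only [weight]
  rw [← Finset.sum_div, ← partitionSum, div_self (cc.partitionSum_pos t n).ne']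

lemma sum_weight_append_bounds {t : ℝ} (ht : 0 < t)
    (hlim : Tendsto (fun k : ℕ => Real.log (cc.partitionSum t k) / k) atTop (nhds 0))
    {k m : ℕ} (hm : m ≠ 0) (s : Fin k → Fin cc.N) :
    (cc.xi ^ ((9:ℝ) * t))⁻¹ * cc.diamJ (List.ofFn s) ^ t ≤
        ∑ τ : Fin m → Fin cc.N, cc.weight t (k + m) (List.ofFn s ++ List.ofFn τ) ∧
      ∑ τ : Fin m → Fin cc.N, cc.weight t (k + m) (List.ofFn s ++ List.ofFn τ) ≤
        cc.xi ^ ((9:ℝ) * t) * cc.diamJ (List.ofFn s) ^ t := by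
  have hξ0 := cc.xi_pos
  have hd0 : 0 ≤ cc.diamJ (List.ofFn s) := Metric.diam_nonneg
  have hX1 : 1 < cc.xi ^ t := Real.one_lt_rpow cc.one_lt_xi ht
  have hX9 : cc.xi ^ ((9:ℝ) * t) = (cc.xi ^ t) ^ 9 := by
    rw [mul_comm, Real.rpow_mul hξ0.le]
    norm_cast
  have hDn : cc.diamJ (List.ofFn s) ^ t ≤ cc.φnorm (List.ofFn s) ^ t :=
    Real.rpow_le_rpow hd0 (cc.diamJ_le_φnorm _) ht.le
  have hnD : cc.φnorm (List.ofFn s) ^ t ≤ cc.xi ^ t * cc.diamJ (List.ofFn s) ^ t := by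
    rw [← Real.mul_rpow hξ0.le hd0]
    exact Real.rpow_le_rpow (cc.φnorm_pos _).le (cc.φnorm_le_xi_mul_diamJ _) ht.le
  have hD0 : 0 ≤ cc.diamJ (List.ofFn s) ^ t := Real.rpow_nonneg hd0 _
  have hT : 0 ≤ ∑ τ : Fin m → Fin cc.N, cc.φnorm (List.ofFn s ++ List.ofFn τ) ^ t :=
    Finset.sum_nonneg fun _ _ => Real.rpow_nonneg (cc.φnorm_pos _).le _
  have hupper := cc.sum_append_le ht.le (List.ofFn s) m
  have hlower := cc.mul_le_sum_append ht.le (List.ofFn s) m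
  obtain ⟨h1, h2⟩ := cc.partitionSum_bounds ht.le hlim (k := k + m) (by omega)
  obtain ⟨h3, h4⟩ := cc.partitionSum_bounds ht.le hlim hm
  simp only [weight]
  rw [← Finset.sum_div, hX9]
  generalize (∑ τ : Fin m → Fin cc.N, cc.φnorm (List.ofFn s ++ List.ofFn τ) ^ t) = T at *
  generalize cc.φnorm (List.ofFn s) ^ t = P at *
  generalize cc.diamJ (List.ofFn s) ^ t = D at *
  generalize cc.xi ^ t = X at *
  generalize cc.partitionSum t (k + m) = S at *
  generalize cc.partitionSum t m = S' at *
  have hP0 : 0 ≤ P := hD0.trans hDn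
  have hX2 : X ^ 2 ≤ X ^ 9 := pow_le_pow_right₀ hX1.le (by norm_num)
  constructor
  · rw [le_div_iff₀ (by linarith), inv_mul_eq_div, div_mul_eq_mul_div, div_le_iff₀ (by positivity)]
    have h5 : P ≤ X * T := (le_mul_of_one_le_right hP0 h3).trans hlower
    calc D * S ≤ (X * T) * X := mul_le_mul (hDn.trans h5) h2 (by linarith) (hP0.trans h5)
      _ = T * X ^ 2 := by ring
      _ ≤ T * X ^ 9 := by gcongr
  · rw [div_le_iff₀ (by linarith)]
    calc T ≤ P * S' := hupper
      _ ≤ (X * D) * X := mul_le_mul hnD h4 (by linarith) (by positivity)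
      _ = X ^ 2 * D := by ring
      _ ≤ X ^ 9 * D := by gcongr
      _ ≤ X ^ 9 * D * S := le_mul_of_one_le_right (by positivity) h1

/-- The discrete approximation placing the mass of each `ω ∈ Ω_n` at `φ_ω(0)`. -/
def approxMeasure (t : ℝ) (n : ℕ) : Measure ℝ :=
  ∑ ω : Fin n → Fin cc.N, ENNReal.ofReal (cc.weight t n (List.ofFn ω)) •
    Measure.dirac (cc.wordMap (List.ofFn ω) 0)

lemma approxMeasure_apply (t : ℝ) (n : ℕ) (A : Set ℝ) :
    cc.approxMeasure t n A = ∑ ω : Fin n → Fin cc.N,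
      ENNReal.ofReal (cc.weight t n (List.ofFn ω)) *
        A.indicator 1 (cc.wordMap (List.ofFn ω) 0) := by
  simp [approxMeasure, Measure.finsetSum_apply]

lemma approxMeasure_eq_one {t : ℝ} {n : ℕ} {A : Set ℝ}
    (hA : ∀ ω : Fin n → Fin cc.N, cc.wordMap (List.ofFn ω) 0 ∈ A) :
    cc.approxMeasure t n A = 1 := by
  rw [approxMeasure_apply]
  simp only [Set.indicator_of_mem (hA _), Pi.one_apply, mul_one]
  rw [← ENNReal.ofReal_sum_of_nonneg fun ω _ => cc.weight_nonneg _ _ _, sum_weight,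
    ENNReal.ofReal_one]

instance isProbabilityMeasure_approxMeasure (t : ℝ) (n : ℕ) :
    IsProbabilityMeasure (cc.approxMeasure t n) :=
  ⟨cc.approxMeasure_eq_one fun _ => Set.mem_univ _⟩

lemma wordMap_append_zero_mem_Jc (σ τ : List (Fin cc.N)) :
    cc.wordMap (σ ++ τ) 0 ∈ cc.Jc σ := by
  rw [wordMap_append]
  exact ⟨_, cc.wordMap_mem_Icc τ (by simp), rfl⟩

lemma approxMeasure_add_apply (t : ℝ) (k m : ℕ) (A : Set ℝ) :
    cc.approxMeasure t (k + m) A = ∑ σ : Fin k → Fin cc.N, ∑ τ : Fin m → Fin cc.N,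
      ENNReal.ofReal (cc.weight t (k + m) (List.ofFn σ ++ List.ofFn τ)) *
        A.indicator 1 (cc.wordMap (List.ofFn σ ++ List.ofFn τ) 0) := by
  rw [approxMeasure_apply]
  exact cc.sum_append k m fun ω => ENNReal.ofReal (cc.weight t (k + m) ω) *
    A.indicator 1 (cc.wordMap ω 0)

lemma ofReal_sum_weight_le_approxMeasure (t : ℝ) {k : ℕ} (m : ℕ) (σ : Fin k → Fin cc.N) :
    ENNReal.ofReal (∑ τ : Fin m → Fin cc.N,
        cc.weight t (k + m) (List.ofFn σ ++ List.ofFn τ)) ≤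
      cc.approxMeasure t (k + m) (cc.Jc (List.ofFn σ)) := by
  rw [approxMeasure_add_apply, ENNReal.ofReal_sum_of_nonneg fun _ _ => cc.weight_nonneg _ _ _]
  refine le_trans (Finset.sum_le_sum fun τ _ => ?_) (Finset.single_le_sum
    (f := fun σ' : Fin k → Fin cc.N => ∑ τ : Fin m → Fin cc.N,
      ENNReal.ofReal (cc.weight t (k + m) (List.ofFn σ' ++ List.ofFn τ)) *
        (cc.Jc (List.ofFn σ)).indicator 1 (cc.wordMap (List.ofFn σ' ++ List.ofFn τ) 0))
    (fun _ _ => zero_le) (Finset.mem_univ σ))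
  rw [Set.indicator_of_mem (cc.wordMap_append_zero_mem_Jc _ _), Pi.one_apply, mul_one]

lemma approxMeasure_le_ofReal_sum_weight (t : ℝ) {k : ℕ} (m : ℕ) (σ : Fin k → Fin cc.N)
    {A : Set ℝ} (hA : ∀ σ' : Fin k → Fin cc.N, σ' ≠ σ → Disjoint (cc.Jc (List.ofFn σ')) A) :
    cc.approxMeasure t (k + m) A ≤ ENNReal.ofReal (∑ τ : Fin m → Fin cc.N,
        cc.weight t (k + m) (List.ofFn σ ++ List.ofFn τ)) := by
  rw [approxMeasure_add_apply, ENNReal.ofReal_sum_of_nonneg fun _ _ => cc.weight_nonneg _ _ _,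
    Finset.sum_eq_single σ]
  · refine Finset.sum_le_sum fun τ _ => mul_le_of_le_one_right' ?_
    exact Set.indicator_le_self _ _ _
  · intro σ' _ hσ'
    refine Finset.sum_eq_zero fun τ _ => ?_
    rw [Set.indicator_of_notMem, mul_zero]
    exact Set.disjoint_left.1 (hA σ' hσ') (cc.wordMap_append_zero_mem_Jc _ _)
  · simp

/-- The complement of the basic intervals of the level of `σ` other than `J_σ`. -/
def isolatingSet {k : ℕ} (σ : Fin k → Fin cc.N) : Set ℝ :=
  (⋃ σ' : {σ' : Fin k → Fin cc.N // σ' ≠ σ}, cc.Jc (List.ofFn σ'.1))ᶜ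

lemma isOpen_isolatingSet {k : ℕ} (σ : Fin k → Fin cc.N) : IsOpen (cc.isolatingSet σ) :=
  (isClosed_iUnion_of_finite fun _ => (cc.isCompact_Jc _).isClosed).isOpen_compl

lemma disjoint_isolatingSet {k : ℕ} {σ σ' : Fin k → Fin cc.N} (hσ : σ' ≠ σ) :
    Disjoint (cc.Jc (List.ofFn σ')) (cc.isolatingSet σ) :=
  Set.disjoint_left.2 fun _ hx hx' => hx' (Set.mem_iUnion.2 ⟨⟨σ', hσ⟩, hx⟩)

lemma Jc_subset_isolatingSet {k : ℕ} (σ : Fin k → Fin cc.N) :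
    cc.Jc (List.ofFn σ) ⊆ cc.isolatingSet σ := by
  rintro _ ⟨x, hx, rfl⟩ hmem
  obtain ⟨⟨σ', hσ'⟩, y, hy, hxy⟩ := Set.mem_iUnion.1 hmem
  exact hσ' (List.ofFn_injective (cc.eq_of_wordMap_eq (by simp) hy hx hxy))

end CookieCutter

theorem gibbs_like_measure_exists (cc : CookieCutter) (Q : ℝ → ℝ)
    (hQ : ∀ t : ℝ, Filter.Tendsto
      (fun k : ℕ => (1 / (k : ℝ)) * Real.log
        (∑ σ : Fin k → Fin cc.N, cc.φnorm (List.ofFn σ) ^ t))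
      Filter.atTop (nhds (Q t)))
    (h : ℝ) (hh0 : 0 < h) (hQh : Q h = 0) :
    1 < cc.xi ^ ((9:ℝ) * h) ∧
    ∃ μ : MeasureTheory.Measure ℝ, MeasureTheory.IsProbabilityMeasure μ ∧ μ (cc.Eᶜ) = 0 ∧
      ∀ σ : List (Fin cc.N), σ ≠ [] →
        (cc.xi ^ ((9:ℝ) * h))⁻¹ * cc.diamJ σ ^ h ≤ (μ (cc.Jc σ)).toReal ∧
        (μ (cc.Jc σ)).toReal ≤ cc.xi ^ ((9:ℝ) * h) * cc.diamJ σ ^ h := by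
  refine ⟨Real.one_lt_rpow cc.one_lt_xi (by linarith), ?_⟩
  have hlim : Tendsto (fun k : ℕ => Real.log (cc.partitionSum h k) / k) atTop (nhds 0) := by
    rw [← hQh]
    refine (hQ h).congr fun k => ?_
    rw [CookieCutter.partitionSum]
    ring
  obtain ⟨μ, U, hU, hμ⟩ := exists_ultrafilter_tendsto_of_isCompact
    (isCompact_Icc (a := (0:ℝ)) (b := 1))
    (fun n => ⟨cc.approxMeasure h n, cc.isProbabilityMeasure_approxMeasure h n⟩)
    (fun n => (prob_compl_eq_zero_iff (μ := cc.approxMeasure h n) measurableSet_Icc).2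
      (cc.approxMeasure_eq_one fun ω => cc.wordMap_mem_Icc _ (by simp)))
  have hev : ∀ k, ∀ᶠ n in (U : Filter ℕ), ∃ m, m ≠ 0 ∧ n = k + m := fun k =>
    ((eventually_gt_atTop k).mono fun n hn => ⟨n - k, by omega, by omega⟩).filter_mono hU
  have hclosed : ∀ {F : Set ℝ} {a : ENNReal} (k : ℕ), IsClosed F →
      (∀ m, m ≠ 0 → a ≤ cc.approxMeasure h (k + m) F) → a ≤ (μ : Measure ℝ) F := by
    intro F a k hF ha
    refine le_trans ?_ (ProbabilityMeasure.limsup_measure_closed_le_of_tendsto hμ hF)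
    refine le_limsup_of_frequently_le' (Eventually.frequently ?_)
    filter_upwards [hev k]
    rintro _ ⟨m, hm, rfl⟩
    exact ha m hm
  have hopen : ∀ {G : Set ℝ} {a : ENNReal} (k : ℕ), IsOpen G →
      (∀ m, m ≠ 0 → cc.approxMeasure h (k + m) G ≤ a) → (μ : Measure ℝ) G ≤ a := by
    intro G a k hG ha
    refine (ProbabilityMeasure.le_liminf_measure_open_of_tendsto hμ hG).trans ?_
    refine liminf_le_of_frequently_le' (Eventually.frequently ?_)
    filter_upwards [hev k]
    rintro _ ⟨m, hm, rfl⟩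
    exact ha m hm
  refine ⟨μ, inferInstance, ?_, ?_⟩
  · have hlevel : ∀ k : ℕ,
        (μ : Measure ℝ) (⋃ σ : Fin k → Fin cc.N, cc.Jc (List.ofFn σ))ᶜ = 0 := by
      intro k
      have hF : IsClosed (⋃ σ : Fin k → Fin cc.N, cc.Jc (List.ofFn σ)) :=
        isClosed_iUnion_of_finite fun _ => (cc.isCompact_Jc _).isClosed
      rw [prob_compl_eq_zero_iff hF.measurableSet]
      refine le_antisymm prob_le_one (hclosed k hF fun m _ => ?_)
      rw [cc.approxMeasure_eq_one]
      intro ω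
      obtain ⟨⟨σ, τ⟩, rfl⟩ := (Fin.appendEquiv k m).surjective ω
      refine Set.mem_iUnion.2 ⟨σ, ?_⟩
      simp only [Fin.appendEquiv, Equiv.coe_fn_mk, List.ofFn_fin_append]
      exact cc.wordMap_append_zero_mem_Jc _ _
    rw [CookieCutter.E, Set.compl_iInter, measure_iUnion_null_iff]
    intro k
    rw [Set.compl_iInter, measure_iUnion_null_iff]
    exact fun _ => hlevel k
  · intro σ _
    obtain ⟨k, s, rfl⟩ : ∃ (k : ℕ) (s : Fin k → Fin cc.N), σ = List.ofFn s :=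
      ⟨σ.length, σ.get, (List.ofFn_get σ).symm⟩
    constructor
    · refine (ENNReal.ofReal_le_iff_le_toReal (measure_ne_top _ _)).1 ?_
      refine hclosed k (cc.isCompact_Jc _).isClosed fun m hm => ?_
      exact (ENNReal.ofReal_le_ofReal
        (cc.sum_weight_append_bounds hh0 hlim hm s).1).trans
          (cc.ofReal_sum_weight_le_approxMeasure h m s)
    · refine ENNReal.toReal_le_of_le_ofReal (mul_nonneg (Real.rpow_nonneg cc.xi_pos.le _)
        (Real.rpow_nonneg Metric.diam_nonneg _)) ?_
      refine (measure_mono (cc.Jc_subset_isolatingSet s)).trans ?_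
      refine hopen k (cc.isOpen_isolatingSet s) fun m hm => ?_
      exact (cc.approxMeasure_le_ofReal_sum_weight h m s
        fun σ' hσ' => cc.disjoint_isolatingSet hσ').trans
          (ENNReal.ofReal_le_ofReal (cc.sum_weight_append_bounds hh0 hlim hm s).2)
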